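/- arXiv:2210.05522 — 3 statements merged into one kernel-verified Lean document; each statement's English description precedes it below -/
import Mathlib

section
/- Let k ≥ 1 and let C be a k×k complex matrix. Define the antisymmetric 2k×2k complex matrix M by M(i, k+j) = C(i,j) and M(k+j, i) = −C(i,j) for 1 ≤ i, j ≤ k, and M(i,j) = 0 whenever both i,j ≤ k or both i,j > k. Then the signed sum over all contractions σ of order 2k, Σ_σ ε(σ) ∏_{i=1}^{k} M(σ(2i−1), σ(2i)), where ε(σ) is the signature of σ, equals (−1)^{k(k−1)/2} det C. (This is the fermionic case of Wick's theorem reduced to its combinatorial content: signed pairings of k creation and k annihilation operators in which two operators of the same type are paired contribute zero, and the surviving cross-pairings sum, up to the stated sign, to a determinant.) -/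
/-- A *contraction* of order `2*k` is a permutation `σ` of `{1,…,2k}` (here `Fin (2*k)`,
0-indexed) such that `σ(2i−1)` is increasing in `i` over the odd positions and
`σ(2i−1) < σ(2i)` for every `i = 1,…,k`. -/
def IsContraction {k : ℕ} (σ : Equiv.Perm (Fin (2 * k))) : Prop :=
  (∀ i j : Fin k, i < j →
      σ ⟨2 * i.val, by have := i.isLt; omega⟩ < σ ⟨2 * j.val, by have := j.isLt; omega⟩) ∧
  (∀ i : Fin k,
      σ ⟨2 * i.val, by have := i.isLt; omega⟩ < σ ⟨2 * i.val + 1, by have := i.isLt; omega⟩)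

instance {k : ℕ} (σ : Equiv.Perm (Fin (2 * k))) : Decidable (IsContraction σ) := by
  unfold IsContraction; infer_instance

/-!
Only pairs inside the last `k` indices need to contribute zero for the theorem to hold. If no pair
`σ(2i) < σ(2i+1)` of a contraction lies there, then `σ(2i) < k` for every `i`, so `i ↦ σ(2i)` is a
strictly increasing self-map of `{0,…,k-1}`, i.e. the identity. The odd positions then carry
`σ(2i+1) = k + τ(i)` for a permutation `τ`, and conversely every `τ` arises from exactly one
contraction.

This contraction is `τ`, acting on the last `k` indices, after the shuffle `2i ↦ i`,
`2i+1 ↦ k+i`. The shuffle is the transposition of a `2 × k` array read in column-major and in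
row-major order; an inversion of an `m × n` transposition is a pair of increasing columns together
with a pair of decreasing rows, so its sign is `(-1)^(C(m,2) C(n,2))`.
-/

namespace FermionicWick

open Equiv Finset

section Transposition

lemma sign_symm_trans_eq_neg_one_pow_card {ι : Type*} [Fintype ι] {n : ℕ} (e f : ι ≃ Fin n) :
    Perm.sign (e.symm.trans f) = (-1) ^ #{p : ι × ι | e p.1 < e p.2 ∧ f p.2 < f p.1} := by
  have hterm (x y : ι) : (if e x < e y then if f x < f y then (1 : ℤˣ) else -1 else 1) =
      if e x < e y ∧ f y < f x then -1 else 1 := by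
    grind [f.injective.eq_iff, e.injective.eq_iff]
  calc Perm.sign (e.symm.trans f)
      = ∏ j, ∏ i, if i < j then
          if e.symm.trans f i < e.symm.trans f j then (1 : ℤˣ) else -1 else 1 := by
        simp only [Perm.sign_eq_prod_prod_Iio, ← prod_filter, filter_gt_eq_Iio]
    _ = ∏ y, ∏ x, if e x < e y ∧ f y < f x then (-1 : ℤˣ) else 1 := by
        simp only [← e.prod_comp, trans_apply, symm_apply_apply, hterm]
    _ = (-1) ^ #{p : ι × ι | e p.1 < e p.2 ∧ f p.2 < f p.1} := by
        rw [prod_comm, ← Fintype.prod_prod_type', ← prod_filter, prod_const]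

lemma finProdFinEquiv_lt_iff {m n : ℕ} {p q : Fin m × Fin n} :
    finProdFinEquiv p < finProdFinEquiv q ↔ p.1 < q.1 ∨ p.1 = q.1 ∧ p.2 < q.2 := by
  obtain ⟨⟨a, i⟩, b, j⟩ := p, q
  have of_lt {a b : Fin m} (i j : Fin n) (hab : a < b) : i + n * a.val < j + n * b.val := by
    calc i + n * a.val < n + n * a.val := by gcongr; exact i.isLt
      _ = n * (a.val + 1) := by ring
      _ ≤ n * b.val := Nat.mul_le_mul_left n hab
      _ ≤ j + n * b.val := Nat.le_add_left _ _
  simp only [Fin.lt_def, finProdFinEquiv_apply_val]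
  rcases lt_trichotomy a b with hab | rfl | hab
  · simp [Fin.lt_def.1 hab, of_lt i j hab]
  · simp
  · simp [hab.ne', (Fin.lt_def.1 hab).not_gt, (of_lt j i hab).le]

/-- The column-major enumeration `(a, i) ↦ a + m * i` of an `m × n` array; the row-major one is
`finProdFinEquiv`. -/
def colMajorEquiv (m n : ℕ) : Fin m × Fin n ≃ Fin (m * n) :=
  (prodComm _ _).trans (finProdFinEquiv.trans (finCongr (mul_comm n m)))

lemma colMajorEquiv_lt_iff {m n : ℕ} {p q : Fin m × Fin n} :
    colMajorEquiv m n p < colMajorEquiv m n q ↔ p.2 < q.2 ∨ p.2 = q.2 ∧ p.1 < q.1 :=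
  finProdFinEquiv_lt_iff (p := p.swap) (q := q.swap)

/-- The transposition of an `m × n` array, as the permutation `a + m * i ↦ i + n * a` of the
positions of its entries. -/
def transposePerm (m n : ℕ) : Perm (Fin (m * n)) :=
  (colMajorEquiv m n).symm.trans finProdFinEquiv

lemma sign_transposePerm (m n : ℕ) :
    Perm.sign (transposePerm m n) = (-1) ^ (m.choose 2 * n.choose 2) := by
  have hinv (p q : Fin m × Fin n) : colMajorEquiv m n p < colMajorEquiv m n q ∧
      finProdFinEquiv q < finProdFinEquiv p ↔ q.1 < p.1 ∧ p.2 < q.2 := by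
    rw [colMajorEquiv_lt_iff, finProdFinEquiv_lt_iff]
    grind
  have hcard : #{p : (Fin m × Fin n) × (Fin m × Fin n) | p.2.1 < p.1.1 ∧ p.1.2 < p.2.2} =
      #(({x | x.1 < x.2} : Finset (Fin m × Fin m)) ×ˢ ({y | y.1 < y.2} : Finset (Fin n × Fin n))) :=
    card_nbij' (fun p => ((p.2.1, p.1.1), (p.1.2, p.2.2)))
      (fun q => ((q.1.2, q.2.1), (q.1.1, q.2.2)))
      (by intro; simp) (by intro; simp) (by intro; simp) (by intro; simp)
  rw [transposePerm, sign_symm_trans_eq_neg_one_pow_card]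
  simp only [hinv]
  rw [hcard, card_product, Fintype.card_product_filter_lt,
    Fintype.card_product_filter_lt, Fintype.card_fin, Fintype.card_fin]

end Transposition

variable {k : ℕ}

lemma colMajorEquiv_two_zero (i : Fin k) : colMajorEquiv 2 k (0, i) = ⟨2 * i, by omega⟩ := by
  ext
  simp [colMajorEquiv]

lemma colMajorEquiv_two_one (i : Fin k) : colMajorEquiv 2 k (1, i) = ⟨2 * i + 1, by omega⟩ := by
  ext
  simp [colMajorEquiv, add_comm]

lemma forall_fin_two_mul {P : Fin (2 * k) → Prop} :
    (∀ x, P x) ↔ (∀ i : Fin k, P ⟨2 * i, by omega⟩) ∧ ∀ i : Fin k, P ⟨2 * i + 1, by omega⟩ := by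
  simp only [← (colMajorEquiv 2 k).forall_congr_right (q := P), Prod.forall, Fin.forall_fin_two,
    colMajorEquiv_two_zero, colMajorEquiv_two_one]

/-- The contraction `2i ↦ i`, `2i + 1 ↦ k + τ i` pairing `i` with `k + τ i`. -/
def wickPerm (τ : Perm (Fin k)) : Perm (Fin (2 * k)) :=
  finProdFinEquiv.permCongr (Perm.prodExtendRight 1 τ) * transposePerm 2 k

lemma wickPerm_even (τ : Perm (Fin k)) (i : Fin k) :
    wickPerm τ ⟨2 * i, by omega⟩ = ⟨i, by omega⟩ := by
  rw [← colMajorEquiv_two_zero]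
  ext
  simp [wickPerm, transposePerm, Perm.prodExtendRight_apply_ne]

lemma wickPerm_odd (τ : Perm (Fin k)) (i : Fin k) :
    wickPerm τ ⟨2 * i + 1, by omega⟩ = ⟨k + τ i, by omega⟩ := by
  rw [← colMajorEquiv_two_one]
  ext
  simp [wickPerm, transposePerm, Perm.prodExtendRight_apply_eq, add_comm]

lemma sign_wickPerm (τ : Perm (Fin k)) :
    Perm.sign (wickPerm τ) = (-1) ^ (k * (k - 1) / 2) * Perm.sign τ := by
  rw [wickPerm, Perm.sign_mul, Perm.sign_permCongr, Perm.sign_prodExtendRight,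
    sign_transposePerm, Nat.choose_self, one_mul, Nat.choose_two_right, mul_comm]

lemma wickPerm_injective : Function.Injective (wickPerm (k := k)) := by
  intro τ τ' h
  ext i
  have hodd := Equiv.congr_fun h ⟨2 * i + 1, by omega⟩
  simpa only [wickPerm_odd, Fin.mk.injEq, Nat.add_left_cancel_iff] using hodd

lemma isContraction_wickPerm (τ : Perm (Fin k)) : IsContraction (wickPerm τ) := by
  refine ⟨fun i j hij => ?_, fun i => ?_⟩
  · rwa [wickPerm_even, wickPerm_even]
  · rw [wickPerm_even, wickPerm_odd, Fin.mk_lt_mk]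
    omega

end FermionicWick

open FermionicWick

namespace IsContraction

variable {k : ℕ} {σ : Equiv.Perm (Fin (2 * k))}

lemma apply_even_eq (hσ : IsContraction σ)
    (hlow : ∀ i : Fin k, (σ ⟨2 * i, by omega⟩).val < k) (i : Fin k) :
    σ ⟨2 * i, by omega⟩ = ⟨i, by omega⟩ := by
  let f (i : Fin k) : Fin k := ⟨σ ⟨2 * i, by omega⟩, hlow i⟩
  have hf : StrictMono f := hσ.1
  have hfi : (f i).val = i.val := congrArg Fin.val (congrFun hf.eq_id i)
  exact Fin.ext hfi

lemma exists_wickPerm_eq (hσ : IsContraction σ)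
    (hlow : ∀ i : Fin k, (σ ⟨2 * i, by omega⟩).val < k) : ∃ τ, wickPerm τ = σ := by
  have heven := hσ.apply_even_eq hlow
  have hodd (i : Fin k) : ∃ j : Fin k, σ ⟨2 * i + 1, by omega⟩ = ⟨k + j, by omega⟩ := by
    have hup : k ≤ σ ⟨2 * i + 1, by omega⟩ := by
      by_contra! hlt
      have hpos := σ.injective (heven ⟨_, hlt⟩)
      rw [Fin.mk.injEq] at hpos
      omega
    exact ⟨⟨σ ⟨2 * i + 1, by omega⟩ - k, by omega⟩, Fin.ext (by dsimp only; omega)⟩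
  choose t ht using hodd
  have ht_inj : Function.Injective t := by
    intro i j hij
    have hpos := σ.injective ((ht i).trans (hij ▸ (ht j).symm))
    rw [Fin.mk.injEq] at hpos
    omega
  refine ⟨.ofBijective t (Finite.injective_iff_bijective.1 ht_inj), Equiv.ext ?_⟩
  refine forall_fin_two_mul.2 ⟨fun i => ?_, fun i => ?_⟩
  · rw [wickPerm_even, heven]
  · simp only [wickPerm_odd, ht, Equiv.ofBijective_apply]

lemma mem_range_wickPerm_of_prod_ne_zero {R : Type*} [CommMonoidWithZero R]
    (hσ : IsContraction σ) {M : Fin (2 * k) → Fin (2 * k) → R}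
    (hM : ∀ i j : Fin (2 * k), k ≤ i.val → i < j → M i j = 0)
    (hprod : ∏ i : Fin k, M (σ ⟨2 * i, by omega⟩) (σ ⟨2 * i + 1, by omega⟩) ≠ 0) :
    σ ∈ Set.range wickPerm := by
  refine hσ.exists_wickPerm_eq fun i => ?_
  by_contra! hup
  exact hprod (Finset.prod_eq_zero (Finset.mem_univ i) (hM _ _ hup (hσ.2 i)))

end IsContraction

theorem fermionic_wick_sum_contractions_eq_det_general {R : Type*} [CommRing R] {k : ℕ}
    (C : Matrix (Fin k) (Fin k) R) (M : Fin (2 * k) → Fin (2 * k) → R)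
    (hC : ∀ i j : Fin k, M ⟨i, by omega⟩ ⟨k + j, by omega⟩ = C i j)
    (hM : ∀ i j : Fin (2 * k), k ≤ i.val → i < j → M i j = 0) :
    ∑ σ : Equiv.Perm (Fin (2 * k)) with IsContraction σ, ((Equiv.Perm.sign σ : ℤ) : R) *
        ∏ i : Fin k, M (σ ⟨2 * i, by omega⟩) (σ ⟨2 * i + 1, by omega⟩)
      = (-1) ^ (k * (k - 1) / 2) * C.det := by
  have hterm (τ : Equiv.Perm (Fin k)) : (-1) ^ (k * (k - 1) / 2) *
      (((Equiv.Perm.sign τ : ℤ) : R) * ∏ i, C i (τ i)) =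
      ((Equiv.Perm.sign (wickPerm τ) : ℤ) : R) *
        ∏ i : Fin k, M (wickPerm τ ⟨2 * i, by omega⟩) (wickPerm τ ⟨2 * i + 1, by omega⟩) := by
    simp only [wickPerm_even, wickPerm_odd, hC, sign_wickPerm]
    push_cast
    ring
  rw [← C.det_transpose, Matrix.det_apply', Finset.mul_sum]
  refine (Finset.sum_of_injOn wickPerm wickPerm_injective.injOn (fun τ _ => ?_)
    (fun σ hσ hrange => ?_) fun τ _ => hterm τ).symm
  · simpa using isContraction_wickPerm τ
  · by_contra hne
    refine hrange ?_
    simpa using (Finset.mem_filter.1 hσ).2.mem_range_wickPerm_of_prod_ne_zero hM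
      (right_ne_zero_of_mul hne)

/-- **Fermionic Wick theorem, combinatorial content.** Let `C` be a `k×k` complex
matrix and `M` the antisymmetric `2k×2k` matrix with `M(i, k+j) = C(i,j)`,
`M(k+j, i) = −C(i,j)`, and `M(i,j) = 0` when `i,j` are both `≤ k` or both `> k`.
Then the signed sum over all contractions `σ` of order `2k`,
`Σ_σ ε(σ) ∏_{i=1}^k M(σ(2i−1), σ(2i))`, equals `(−1)^{k(k−1)/2} det C`. -/
theorem fermionic_wick_sum_contractions_eq_det (k : ℕ) (hk : 1 ≤ k)
    (C : Matrix (Fin k) (Fin k) ℂ) (M : Fin (2 * k) → Fin (2 * k) → ℂ)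
    (hM1 : ∀ i j : Fin k,
      M ⟨i.val, by have := i.isLt; omega⟩ ⟨k + j.val, by have := j.isLt; omega⟩ = C i j)
    (hM2 : ∀ i j : Fin k,
      M ⟨k + j.val, by have := j.isLt; omega⟩ ⟨i.val, by have := i.isLt; omega⟩ = -C i j)
    (hM0 : ∀ i j : Fin (2 * k),
      ((i.val < k ∧ j.val < k) ∨ (k ≤ i.val ∧ k ≤ j.val)) → M i j = 0) :
    ∑ σ ∈ Finset.univ.filter (fun σ : Equiv.Perm (Fin (2 * k)) => IsContraction σ),
        ((Equiv.Perm.sign σ : ℤ) : ℂ) *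
          ∏ i : Fin k,
            M (σ ⟨2 * i.val, by have := i.isLt; omega⟩)
              (σ ⟨2 * i.val + 1, by have := i.isLt; omega⟩)
      = (-1 : ℂ) ^ (k * (k - 1) / 2) * Matrix.det C :=
  fermionic_wick_sum_contractions_eq_det_general C M hM1 fun i j hi hij =>
    hM0 i j (.inr ⟨hi, hi.trans hij.le⟩)
end

section
/- Let n, k be natural numbers. The iterated mixed derivative at the origin of the entire function (z,w) ↦ exp(z·w)·z^n·w^n of two complex variables satisfies: ∂_z^k ∂_w^k [exp(z·w)·z^n·w^n]│_{z=w=0} = (k!)²/(k−n)! if n ≤ k, and 0 if n > k. Consequently, dividing by k!, one obtains the value k!/(k−n)! for n ≤ k and 0 for n > k (the n-point correlation function, up to the factor 𝒩^n, of the point process associated with a single-mode Fock state with k photons via its Glauber–Sudarshan representation). -/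
/-! Replace `exp` by any smooth `f`. In the Leibniz expansion of the `k`-th `z`-derivative of
`z ^ n * f (z * w)` at `z = 0`, only the term in which `z ^ n` is differentiated exactly `n` times
survives, and the other `k - n` derivatives, falling on `f (z * w)`, produce `w ^ (k - n)`.
Together with the factor `w ^ n` this is a multiple of `w ^ k`, whose `k`-th derivative is `k!`. -/

open scoped Nat

section

variable {𝕜 F : Type*} [NontriviallyNormedField 𝕜] [NormedAddCommGroup F] [NormedSpace 𝕜 F]
  {f : 𝕜 → F} {k : ℕ}

lemma iteratedDeriv_pow_smul_zero (hf : ContDiffAt 𝕜 k f 0) (m : ℕ) :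
    iteratedDeriv k (fun z ↦ z ^ m • f z) 0
      = k.descFactorial m • iteratedDeriv (k - m) f 0 := by
  have leibniz : iteratedDeriv k (fun z ↦ z ^ m • f z) 0 = ∑ i ∈ Finset.range (k + 1),
      k.choose i • iteratedDeriv i (· ^ m) (0 : 𝕜) • iteratedDeriv (k - i) f 0 := by
    simpa only [iteratedDerivWithin_univ] using! iteratedDerivWithin_smul (Set.mem_univ 0)
      uniqueDiffOn_univ (contDiff_id.pow m).contDiffWithinAt hf.contDiffWithinAt
  rw [leibniz, Finset.sum_eq_single m]
  · rw [iteratedDeriv_fun_pow_zero, if_pos rfl, Nat.cast_smul_eq_nsmul, smul_smul, mul_comm,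
      Nat.descFactorial_eq_factorial_mul_choose]
  · intro i _ hi
    rw [iteratedDeriv_fun_pow_zero, if_neg hi, Nat.cast_zero, zero_smul, smul_zero]
  · intro hm
    rw [Nat.choose_eq_zero_of_lt (by simpa using hm), zero_smul]

lemma iteratedDeriv_pow_smul_comp_mul_zero (hf : ContDiff 𝕜 k f) (m : ℕ) (w : 𝕜) :
    iteratedDeriv k (fun z ↦ z ^ m • f (z * w)) 0
      = w ^ (k - m) • k.descFactorial m • iteratedDeriv (k - m) f 0 := by
  simp only [mul_comm _ w]
  rw [iteratedDeriv_pow_smul_zero (by fun_prop),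
    iteratedDeriv_comp_const_smul (hf.of_le (mod_cast k.sub_le m)), smul_comm]
  simp only [mul_zero]

lemma iteratedDeriv_iteratedDeriv_pow_smul_pow_smul_comp_mul_zero (hf : ContDiff 𝕜 k f)
    (l m n : ℕ) :
    iteratedDeriv l (fun w ↦ iteratedDeriv k (fun z ↦ w ^ n • z ^ m • f (z * w)) 0) 0
      = if l = n + (k - m) then (l ! * k.descFactorial m) • iteratedDeriv (k - m) f 0 else 0 := by
  simp only [iteratedDeriv_fun_const_smul_field, iteratedDeriv_pow_smul_comp_mul_zero hf]
  simp only [smul_smul (_ ^ n), ← pow_add]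
  rw [iteratedDeriv_smul_const (by fun_prop), iteratedDeriv_fun_pow_zero]
  split_ifs with hl
  · rw [← hl, Nat.cast_smul_eq_nsmul, smul_smul]
  · rw [Nat.cast_zero, zero_smul]

end

lemma iteratedDeriv_cexp_zero (j : ℕ) : iteratedDeriv j Complex.exp 0 = 1 := by
  rw [iteratedDeriv_eq_iterate, Complex.iter_deriv_exp, Complex.exp_zero]

lemma iteratedDeriv_iteratedDeriv_cexp_mul_pow_mul_pow_zero (n k : ℕ) :
    iteratedDeriv k
        (fun w : ℂ ↦ iteratedDeriv k (fun z : ℂ ↦ Complex.exp (z * w) * z ^ n * w ^ n) 0) 0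
      = k ! * k.descFactorial n := by
  have hsmul (z w : ℂ) :
      Complex.exp (z * w) * z ^ n * w ^ n = w ^ n • z ^ n • Complex.exp (z * w) := by
    simp only [smul_eq_mul]
    ring
  simp only [hsmul]
  rw [iteratedDeriv_iteratedDeriv_pow_smul_pow_smul_comp_mul_zero Complex.contDiff_exp,
    iteratedDeriv_cexp_zero, nsmul_one]
  rcases le_or_gt n k with hnk | hkn
  · rw [if_pos (Nat.add_sub_of_le hnk).symm, Nat.cast_mul]
  · simp [Nat.descFactorial_of_lt hkn]

lemma cast_descFactorial_eq_ite {K : Type*} [DivisionSemiring K] [CharZero K] (k n : ℕ) :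
    (k.descFactorial n : K) = if n ≤ k then (k ! : K) / ((k - n)! : K) else 0 := by
  split_ifs with hnk
  · rw [eq_div_iff (mod_cast (k - n).factorial_ne_zero), ← Nat.cast_mul, mul_comm,
      Nat.factorial_mul_descFactorial hnk]
  · rw [Nat.descFactorial_of_lt (not_le.mp hnk), Nat.cast_zero]

/-- **Glauber–Sudarshan derivatives for a single-mode Fock state.**
For natural numbers `n, k`, the mixed derivative at the origin of
`(z,w) ↦ exp(z·w)·z^n·w^n` satisfies
`∂_z^k ∂_w^k [exp(z·w)·z^n·w^n]│_{z=w=0} = (k!)²/(k−n)!` if `n ≤ k`, and `0`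
otherwise; consequently, dividing by `k!` gives `k!/(k−n)!` for `n ≤ k` and `0`
for `n > k`. -/
theorem iteratedDeriv_exp_mul_monomial (n k : ℕ) :
    iteratedDeriv k
        (fun w : ℂ => iteratedDeriv k (fun z : ℂ => Complex.exp (z * w) * z ^ n * w ^ n) 0) 0
      = (if n ≤ k then ((k.factorial : ℂ)) ^ 2 / ((k - n).factorial : ℂ) else 0) ∧
    (k.factorial : ℂ)⁻¹ *
        iteratedDeriv k
          (fun w : ℂ => iteratedDeriv k (fun z : ℂ => Complex.exp (z * w) * z ^ n * w ^ n) 0) 0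
      = (if n ≤ k then ((k.factorial : ℂ)) / ((k - n).factorial : ℂ) else 0) := by
  have hk : (k ! : ℂ) ≠ 0 := mod_cast k.factorial_ne_zero
  rw [iteratedDeriv_iteratedDeriv_cexp_mul_pow_mul_pow_zero]
  constructor
  · rw [cast_descFactorial_eq_ite, mul_ite, mul_zero, ← mul_div_assoc, ← sq]
  · rw [inv_mul_cancel_left₀ hk, cast_descFactorial_eq_ite]
end

section
/- Let ι be a countable index set and let x : ι → ℝ satisfy x_i ≥ 0 for all i and be summable. Then the sum over all finite subsets S of ι of the products ∏_{i ∈ S} x_i converges and equals the convergent infinite product ∏_i (1 + x_i). (With x_i = e^{−β(ν_i − ζ)}, this is the fermionic grand-canonical partition function Z_{−1} = ∏_p (1 + e^{−β(ν_p − ζ)}), the sum running over all fermionic occupation-number configurations, where each occupation number is 0 or 1.) -/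
theorem fermionic_partition_function_general {ι R : Type*} [NormedCommRing R] [NormOneClass R]
    [CompleteSpace R] {x : ι → R} (hx : Summable fun i => ‖x i‖) :
    Summable (fun S : Finset ι => ∏ i ∈ S, x i) ∧
    Multipliable (fun i => 1 + x i) ∧
    ∑' S : Finset ι, ∏ i ∈ S, x i = ∏' i, (1 + x i) := by
  have summable_prod : Summable (fun S : Finset ι => ∏ i ∈ S, x i) :=
    summable_finsetProd_of_summable_norm hx
  exact ⟨summable_prod, multipliable_one_add_of_summable_prod summable_prod,
    (tprod_one_add summable_prod).symm⟩

/-- **Fermionic grand-canonical partition function.** If `x_i ≥ 0` for all `i` and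
`x` is summable over a countable index set, then the sum over all finite subsets `S`
of `ι` (fermionic occupation-number configurations) of `∏_{i∈S} x_i` converges and
equals the convergent infinite product `∏_i (1 + x_i)`. -/
theorem fermionic_partition_function (ι : Type*) [Countable ι] (x : ι → ℝ)
    (h0 : ∀ i, 0 ≤ x i) (hs : Summable x) :
    Summable (fun S : Finset ι => ∏ i ∈ S, x i) ∧
    Multipliable (fun i => 1 + x i) ∧
    ∑' S : Finset ι, ∏ i ∈ S, x i = ∏' i, (1 + x i) :=
  fermionic_partition_function_general hs.norm
end
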